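/- Let G be a finite bipartite graph with color classes A and B, b : V(G) → ℕ, M a maximum b-matching of G, and let C and D be b-consistent flexible components. Then the following are equivalent: (i) C ⪯_A D (via a chain of b-consistent flexible components); (ii) for every u ∈ V(C) and every v ∈ V(D) there is an (M; A, B)-ascending path from u to v; (iii) there exist u ∈ V(C) and v ∈ V(D) such that there is an (M; A, B)-ascending path from u to v. -/

import Mathlib

open scoped symmDiff

variable {V : Type} [Fintype V]

/-- `G` is bipartite with color classes `A` and `B`. -/
structure Bipartition (G : SimpleGraph V) (A B : Set V) : Prop where
  disjoint : Disjoint A B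
  cover : A ∪ B = Set.univ
  between : ∀ ⦃u v : V⦄, G.Adj u v → (u ∈ A ∧ v ∈ B) ∨ (u ∈ B ∧ v ∈ A)

/-- `M` is a `b`-matching of `G`: a set of edges of `G` such that each vertex `v` is
incident to at most `b v` edges of `M`. -/
def IsBMatching (G : SimpleGraph V) (b : V → ℕ) (M : Set (Sym2 V)) : Prop :=
  M ⊆ G.edgeSet ∧ ∀ v : V, {e ∈ M | v ∈ e}.ncard ≤ b v

/-- `M` is a maximum `b`-matching of `G`. -/
def IsMaxBMatching (G : SimpleGraph V) (b : V → ℕ) (M : Set (Sym2 V)) : Prop :=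
  IsBMatching G b M ∧ ∀ N : Set (Sym2 V), IsBMatching G b N → N.ncard ≤ M.ncard

/-- `E[X]`: the set of edges of `G` with both ends in `X`. -/
def edgesIn (G : SimpleGraph V) (X : Set V) : Set (Sym2 V) :=
  {e ∈ G.edgeSet | ∀ v ∈ e, v ∈ X}

/-- `b(X) = ∑_{v ∈ X} b v`. -/
noncomputable def bSum (b : V → ℕ) (X : Set V) : ℕ := ∑ᶠ v ∈ X, b v

/-- `Z` is a `b`-verifying set: `b(Zᶜ) + |E[Z]|` equals the size of a maximum `b`-matching. -/
def IsVerifying (G : SimpleGraph V) (b : V → ℕ) (Z : Set V) : Prop :=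
  ∃ M : Set (Sym2 V), IsMaxBMatching G b M ∧ bSum b Zᶜ + (edgesIn G Z).ncard = M.ncard

/-- `v` is `M`-tight. -/
def IsTight (b : V → ℕ) (M : Set (Sym2 V)) (v : V) : Prop :=
  {e ∈ M | v ∈ e}.ncard = b v

/-- `v` is `M`-loose. -/
def IsLoose (b : V → ℕ) (M : Set (Sym2 V)) (v : V) : Prop :=
  {e ∈ M | v ∈ e}.ncard < b v

/-- `M` is a perfect `b`-matching. -/
def IsPerfect (G : SimpleGraph V) (b : V → ℕ) (M : Set (Sym2 V)) : Prop :=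
  IsBMatching G b M ∧ ∀ v : V, IsTight b M v

/-- An edge is `b`-inevitable if it is an edge of `G` contained in every maximum `b`-matching. -/
def IsInevitable (G : SimpleGraph V) (b : V → ℕ) (e : Sym2 V) : Prop :=
  e ∈ G.edgeSet ∧ ∀ M : Set (Sym2 V), IsMaxBMatching G b M → e ∈ M

/-- An edge is `b`-forbidden if it is an edge of `G` contained in no maximum `b`-matching. -/
def IsForbidden (G : SimpleGraph V) (b : V → ℕ) (e : Sym2 V) : Prop :=
  e ∈ G.edgeSet ∧ ∀ M : Set (Sym2 V), IsMaxBMatching G b M → e ∉ M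

/-- An edge is `b`-flexible if some maximum `b`-matching contains it and some does not. -/
def IsFlexibleEdge (G : SimpleGraph V) (b : V → ℕ) (e : Sym2 V) : Prop :=
  (∃ M : Set (Sym2 V), IsMaxBMatching G b M ∧ e ∈ M) ∧
  (∃ M : Set (Sym2 V), IsMaxBMatching G b M ∧ e ∉ M)

/-- The spanning subgraph of `G` whose edges are the `b`-flexible edges. -/
def flexGraph (G : SimpleGraph V) (b : V → ℕ) : SimpleGraph V where
  Adj u v := IsFlexibleEdge G b s(u, v)
  symm := by
    constructor
    intro u v h
    rwa [Sym2.eq_swap] at h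
  loopless := by
    constructor
    intro v h
    obtain ⟨⟨M, hM, heM⟩, -⟩ := h
    exact G.loopless.irrefl v ((G.mem_edgeSet).mp (hM.1.1 heM))

/-- A `b`-flexible component of `G`, identified with the corresponding connected
component of the spanning subgraph of flexible edges. -/
abbrev FlexComp (G : SimpleGraph V) (b : V → ℕ) := (flexGraph G b).ConnectedComponent

/-- `D(G;b)`: the set of vertices that are `M`-loose for some maximum `b`-matching `M`. -/
def Dset (G : SimpleGraph V) (b : V → ℕ) : Set V :=
  {v | ∃ M : Set (Sym2 V), IsMaxBMatching G b M ∧ IsLoose b M v}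

/-- `c` is a `b`-loose flexible component. -/
def LooseComp (G : SimpleGraph V) (b : V → ℕ) (c : FlexComp G b) : Prop :=
  ∃ v ∈ c.supp, v ∈ Dset G b

/-- `c` is a `b`-inactive flexible component. -/
def InactiveComp (G : SimpleGraph V) (b : V → ℕ) (c : FlexComp G b) : Prop :=
  ∃ v, c.supp = {v} ∧ b v = 0

/-- `c` is a `b`-inconsistent flexible component. -/
def InconsistentComp (G : SimpleGraph V) (b : V → ℕ) (c : FlexComp G b) : Prop :=
  LooseComp G b c ∨ ∃ v, c.supp = {v} ∧ b v = 0 ∧ ∃ u ∈ Dset G b, G.Adj v u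

/-- `c` is a `b`-consistent flexible component. -/
def ConsistentComp (G : SimpleGraph V) (b : V → ℕ) (c : FlexComp G b) : Prop :=
  ¬ InconsistentComp G b c

/-- `c` is a `b`-loose flexible component hooked up by the color class `W`. -/
def LooseHooked (G : SimpleGraph V) (b : V → ℕ) (W : Set V) (c : FlexComp G b) : Prop :=
  ∃ v ∈ c.supp ∩ W, v ∈ Dset G b

/-- `c` is a `b`-inactive flexible component hooked up by the color class `W`. -/
def InactiveHooked (G : SimpleGraph V) (b : V → ℕ) (W : Set V) (c : FlexComp G b) : Prop :=
  ∃ v, c.supp = {v} ∧ b v = 0 ∧ ∃ u ∈ Dset G b ∩ W, G.Adj v u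

/-- `c` is a `b`-inconsistent flexible component hooked up by the color class `W`. -/
def HookedUp (G : SimpleGraph V) (b : V → ℕ) (W : Set V) (c : FlexComp G b) : Prop :=
  LooseHooked G b W c ∨ InactiveHooked G b W c

/-- `X` is separating: empty or a union of vertex sets of `b`-flexible components. -/
def IsSeparating (G : SimpleGraph V) (b : V → ℕ) (X : Set V) : Prop :=
  ∃ S : Set (FlexComp G b), X = ⋃ c ∈ S, c.supp

/-- The number of edges in the list `es` incident to `v` that lie in `M`. -/
noncomputable def edgeDeg (es : List (Sym2 V)) (M : Set (Sym2 V)) (v : V) : ℕ :=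
  {e : Sym2 V | e ∈ es ∧ v ∈ e ∧ e ∈ M}.ncard

/-- `p` is an `M`-wedge path from `x` to `y`. -/
def IsWedgePath {G : SimpleGraph V} (M : Set (Sym2 V)) {x y : V} (p : G.Walk x y) : Prop :=
  p.IsPath ∧ (∀ v ∈ p.support, v ≠ y → edgeDeg p.edges M v = 1) ∧ edgeDeg p.edges M y = 0

/-- `p` is an `M`-saturated path between `x` and `y`. -/
def IsSaturatedPath {G : SimpleGraph V} (M : Set (Sym2 V)) {x y : V} (p : G.Walk x y) : Prop :=
  p.IsPath ∧ ∀ v ∈ p.support, edgeDeg p.edges M v = 1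

/-- `p` is an `M`-exposed path between `x` and `y`. -/
def IsExposedPath {G : SimpleGraph V} (M : Set (Sym2 V)) {x y : V} (p : G.Walk x y) : Prop :=
  p.IsPath ∧ ∀ v ∈ p.support, edgeDeg p.edges Mᶜ v = 1

/-- `p` is an `(M; A, B)`-ascending path from `u` to `v`. -/
def IsAscending {G : SimpleGraph V} (A B : Set V) (M : Set (Sym2 V)) {u v : V}
    (p : G.Walk u v) : Prop :=
  (u ∈ A → v ∈ A → IsWedgePath M p) ∧
  (u ∈ A → v ∈ B → IsSaturatedPath M p) ∧
  (u ∈ B → v ∈ A → IsExposedPath M p) ∧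
  (u ∈ B → v ∈ B → IsWedgePath M p.reverse)

/-- The one-step relation `⊴_A` on `b`-flexible components: `c₁ ⊴_A c₂` iff `c₁ = c₂`, or
there is a `b`-inevitable edge between `V(c₁) ∩ A` and `V(c₂) ∩ B`, or a `b`-forbidden edge
between `V(c₂) ∩ A` and `V(c₁) ∩ B`. -/
def StepRel (G : SimpleGraph V) (b : V → ℕ) (A B : Set V) (c₁ c₂ : FlexComp G b) : Prop :=
  c₁ = c₂ ∨
  (∃ u ∈ c₁.supp ∩ A, ∃ v ∈ c₂.supp ∩ B, IsInevitable G b s(u, v)) ∨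
  (∃ u ∈ c₂.supp ∩ A, ∃ v ∈ c₁.supp ∩ B, IsForbidden G b s(u, v))

/-- The one-step relation `⊴_A` restricted to `b`-consistent flexible components. -/
def ConsStepRel (G : SimpleGraph V) (b : V → ℕ) (A B : Set V) (c₁ c₂ : FlexComp G b) : Prop :=
  ConsistentComp G b c₁ ∧ ConsistentComp G b c₂ ∧ StepRel G b A B c₁ c₂

/-- `I` is a lower ideal of the relation `r`. -/
def IsLowerIdeal {α : Type*} (r : α → α → Prop) (I : Set α) : Prop :=
  ∀ ⦃c d : α⦄, d ∈ I → r c d → c ∈ I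

/-- `I` is an upper ideal of the relation `r`. -/
def IsUpperIdeal {α : Type*} (r : α → α → Prop) (I : Set α) : Prop :=
  ∀ ⦃c d : α⦄, c ∈ I → r c d → d ∈ I

section Helpers

set_option linter.unusedSectionVars false

open scoped Classical

namespace Bipartition

theorem swap {G : SimpleGraph V} {A B : Set V} (h : Bipartition G A B) : Bipartition G B A where
  disjoint := h.disjoint.symm
  cover := by rw [Set.union_comm]; exact h.cover
  between := fun u v huv => (h.between huv).symm

theorem mem_B {G : SimpleGraph V} {A B : Set V} (h : Bipartition G A B) (v : V) :
    v ∈ B ↔ v ∉ A := by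
  constructor
  · intro hB hA
    exact Set.disjoint_left.mp h.disjoint hA hB
  · intro hA
    have : v ∈ A ∪ B := by rw [h.cover]; trivial
    exact this.resolve_left hA

theorem adj_iff {G : SimpleGraph V} {A B : Set V} (h : Bipartition G A B) {u v : V}
    (huv : G.Adj u v) : v ∈ A ↔ u ∉ A := by
  have := h.between huv
  rw [h.mem_B, h.mem_B] at this
  tauto

end Bipartition

/-- Orientation of `G` by `M`: edges of `M` go from `A` to `B`, others from `B` to `A`. -/
def Dir (G : SimpleGraph V) (A : Set V) (M : Set (Sym2 V)) (u v : V) : Prop :=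
  G.Adj u v ∧ (u ∈ A ↔ s(u, v) ∈ M)

theorem dir_swap {G : SimpleGraph V} {A B : Set V} (h : Bipartition G A B) (M : Set (Sym2 V))
    (u v : V) : Dir G B M u v ↔ Dir G A M v u := by
  unfold Dir
  rw [G.adj_comm v u, Sym2.eq_swap, h.mem_B]
  constructor
  · rintro ⟨h1, h2⟩
    exact ⟨h1, by rw [h.adj_iff h1]; exact h2⟩
  · rintro ⟨h1, h2⟩
    exact ⟨h1, by rw [h.adj_iff h1] at h2; exact h2⟩

/-- Reachability in the orientation. -/
def Reach (G : SimpleGraph V) (A : Set V) (M : Set (Sym2 V)) : V → V → Prop :=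
  Relation.ReflTransGen (Dir G A M)

theorem reach_swap {G : SimpleGraph V} {A B : Set V} (h : Bipartition G A B) (M : Set (Sym2 V))
    (u v : V) : Reach G B M u v ↔ Reach G A M v u := by
  unfold Reach
  have : Dir G B M = Function.swap (Dir G A M) := by
    ext u v; exact dir_swap h M u v
  rw [this, Relation.reflTransGen_swap]

theorem edgeDeg_cons (e : Sym2 V) (es : List (Sym2 V)) (X : Set (Sym2 V)) (w : V) (he : e ∉ es) :
    edgeDeg (e :: es) X w = edgeDeg es X w + (if w ∈ e ∧ e ∈ X then 1 else 0) := by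
  unfold edgeDeg
  split_ifs with h
  · have : {e' : Sym2 V | e' ∈ e :: es ∧ w ∈ e' ∧ e' ∈ X}
        = insert e {e' : Sym2 V | e' ∈ es ∧ w ∈ e' ∧ e' ∈ X} := by
      ext e'
      simp only [List.mem_cons, Set.mem_ofPred_eq, Set.mem_insert_iff]
      constructor
      · rintro ⟨rfl | h1, h2⟩
        · left; rfl
        · right; exact ⟨h1, h2⟩
      · rintro (rfl | ⟨h1, h2⟩)
        · exact ⟨Or.inl rfl, h⟩
        · exact ⟨Or.inr h1, h2⟩
    rw [this, Set.ncard_insert_of_notMem (fun h' => he h'.1) (Set.toFinite _)]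
  · congr 1
    ext e'
    simp only [List.mem_cons, Set.mem_ofPred_eq]
    constructor
    · rintro ⟨rfl | h1, h2⟩
      · exact absurd h2 h
      · exact ⟨h1, h2⟩
    · rintro ⟨h1, h2⟩
      exact ⟨Or.inr h1, h2⟩

theorem edgeDeg_eq_zero {G : SimpleGraph V} {u v : V} (p : G.Walk u v) (X : Set (Sym2 V)) (w : V)
    (hw : w ∉ p.support) : edgeDeg p.edges X w = 0 := by
  unfold edgeDeg
  rw [Set.ncard_eq_zero (Set.toFinite _)]
  ext e
  simp only [Set.mem_ofPred_eq, Set.mem_empty_iff_false, iff_false]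
  rintro ⟨h1, h2, -⟩
  exact hw (SimpleGraph.Walk.mem_support_of_mem_edges h1 h2)

/-- Expected number of path edges in `X` at `w`, for a directed path from `u` to `v`. -/
noncomputable def expDeg (A : Set V) (u v w : V) : ℕ :=
  if w ∈ A then (if w = v then 0 else 1) else (if w = u then 0 else 1)

theorem dir_iff_deg {G : SimpleGraph V} {A B : Set V} (hG : Bipartition G A B)
    (X : Set (Sym2 V)) {u v : V} (p : G.Walk u v) (hp : p.IsPath) :
    (∀ d ∈ p.darts, (d.fst ∈ A ↔ d.edge ∈ X)) ↔
      ∀ w ∈ p.support, edgeDeg p.edges X w = expDeg A u v w := by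
  induction p with
  | nil => simp [edgeDeg, expDeg]
  | @cons u u' v h p ih =>
    rw [SimpleGraph.Walk.cons_isPath_iff] at hp
    obtain ⟨hp, hu⟩ := hp
    have ih := ih hp
    have hadj := hG.adj_iff h
    have he : s(u, u') ∉ p.edges := fun h' =>
      hu (SimpleGraph.Walk.mem_support_of_mem_edges h' (Sym2.mem_mk_left _ _))
    have huv : u ≠ v := fun h' => hu (h' ▸ p.end_mem_support)
    have hu0 := edgeDeg_eq_zero p X u hu
    have hne : u ≠ u' := h.ne
    simp only [SimpleGraph.Walk.darts_cons, SimpleGraph.Walk.support_cons,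
      SimpleGraph.Walk.edges_cons, List.forall_mem_cons, ih, edgeDeg_cons _ _ _ _ he, hu0]
    have hfirst : (0 + (if u ∈ s(u, u') ∧ s(u, u') ∈ X then 1 else 0) = expDeg A u v u) ↔
        (u ∈ A ↔ s(u, u') ∈ X) := by
      simp only [expDeg, Sym2.mem_mk_left, true_and, huv, if_false, if_true]
      by_cases h1 : u ∈ A <;> by_cases h2 : s(u, u') ∈ X <;> simp [h1, h2]
    rw [hfirst]
    simp only [SimpleGraph.Dart.edge_mk]
    refine and_congr_right fun h1 => forall₂_congr fun w hw => ?_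
    have hwu : w ≠ u := fun h' => hu (h' ▸ hw)
    by_cases hwu' : w = u'
    · subst hwu'
      simp only [expDeg, Sym2.mem_mk_right, true_and, ← h1, hadj]
      by_cases h2 : u ∈ A <;> simp [h2, hwu]
    · simp [expDeg, hwu, hwu']

theorem ascending_iff {G : SimpleGraph V} {A B : Set V} (hG : Bipartition G A B)
    (M : Set (Sym2 V)) {u v : V} (p : G.Walk u v) :
    IsAscending A B M p ↔ p.IsPath ∧ ∀ d ∈ p.darts, Dir G A M d.fst d.snd := by
  have hdir : (∀ d ∈ p.darts, Dir G A M d.fst d.snd) ↔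
      ∀ d ∈ p.darts, (d.fst ∈ A ↔ d.edge ∈ M) := by
    refine forall₂_congr fun d _ => ?_
    unfold Dir
    exact ⟨fun h => h.2, fun h => ⟨d.adj, h⟩⟩
  have hdir' : (∀ d ∈ p.darts, Dir G A M d.fst d.snd) ↔
      ∀ d ∈ p.darts, (d.fst ∈ B ↔ d.edge ∈ Mᶜ) := by
    rw [hdir]
    refine forall₂_congr fun d _ => ?_
    rw [hG.mem_B, Set.mem_compl_iff, not_iff_not]
  have hu := hG.mem_B u
  have hv := hG.mem_B v
  have hrev : ∀ w, edgeDeg p.reverse.edges M w = edgeDeg p.edges M w := by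
    intro w; simp [edgeDeg]
  unfold IsAscending IsWedgePath IsSaturatedPath IsExposedPath
  simp only [hrev, SimpleGraph.Walk.isPath_reverse_iff, SimpleGraph.Walk.support_reverse,
    List.mem_reverse]
  by_cases h1 : u ∈ A <;> by_cases h2 : v ∈ A <;>
    simp only [h1, h2, hu, hv, true_imp_iff, false_imp_iff, not_true, not_false_iff,
      true_and, and_true] <;> refine and_congr_right fun hp => ?_
  · rw [hdir, dir_iff_deg hG M p hp]
    constructor
    · rintro ⟨h3, h4⟩ w hw
      by_cases hwv : w = v
      · subst hwv; simp [expDeg, h2, h4]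
      · rw [h3 w hw hwv]
        have : w ∉ A → w ≠ u := fun h h' => h (h' ▸ h1)
        by_cases hA : w ∈ A <;> simp_all [expDeg]
    · intro h
      constructor
      · intro w hw hwv
        rw [h w hw]
        have : w ∉ A → w ≠ u := fun h h' => h (h' ▸ h1)
        by_cases hA : w ∈ A <;> simp_all [expDeg]
      · rw [h v p.end_mem_support]; simp [expDeg, h2]
  · rw [hdir, dir_iff_deg hG M p hp]
    refine forall₂_congr fun w hw => ?_
    have : expDeg A u v w = 1 := by
      have h3 : w ∉ A → w ≠ u := fun h h' => h (h' ▸ h1)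
      have h4 : w ∈ A → w ≠ v := fun h h' => h2 (h' ▸ h)
      by_cases hA : w ∈ A <;> simp_all [expDeg]
    rw [this]
  · rw [hdir', dir_iff_deg hG.swap Mᶜ p hp]
    refine forall₂_congr fun w hw => ?_
    have : expDeg B u v w = 1 := by
      have h3 : w ∈ A → w ≠ u := fun h h' => h1 (h' ▸ h)
      have h4 : w ∉ A → w ≠ v := fun h h' => h (h' ▸ h2)
      have := hG.mem_B w
      by_cases hA : w ∈ A <;> simp_all [expDeg]
    rw [this]
  · rw [hdir, dir_iff_deg hG M p hp]
    constructor
    · rintro ⟨h3, h4⟩ w hw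
      by_cases hwv : w = u
      · subst hwv; simp [expDeg, h1, h4]
      · rw [h3 w hw hwv]
        have : w ∈ A → w ≠ v := fun h h' => h2 (h' ▸ h)
        by_cases hA : w ∈ A <;> simp_all [expDeg]
    · intro h
      constructor
      · intro w hw hwv
        rw [h w hw]
        have : w ∈ A → w ≠ v := fun h h' => h2 (h' ▸ h)
        by_cases hA : w ∈ A <;> simp_all [expDeg]
      · rw [h u p.start_mem_support]; simp [expDeg, h1]

theorem reach_iff_path {G : SimpleGraph V} {A : Set V} {M : Set (Sym2 V)} {u v : V} :
    Reach G A M u v ↔ ∃ p : G.Walk u v, p.IsPath ∧ ∀ d ∈ p.darts, Dir G A M d.fst d.snd := by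
  constructor
  · intro h
    have : ∃ p : G.Walk u v, ∀ d ∈ p.darts, Dir G A M d.fst d.snd := by
      induction h using Relation.ReflTransGen.head_induction_on with
      | refl => exact ⟨.nil, by simp⟩
      | head h1 _ ih =>
        obtain ⟨p, hp⟩ := ih
        exact ⟨.cons h1.1 p, by simpa using ⟨h1, hp⟩⟩
    obtain ⟨p, hp⟩ := this
    exact ⟨p.bypass, p.bypass_isPath, fun d hd => hp d (p.darts_bypass_subset_darts hd)⟩
  · rintro ⟨p, -, hp⟩
    induction p with
    | nil => exact .refl
    | cons h p ih =>
      simp only [SimpleGraph.Walk.darts_cons, List.forall_mem_cons] at hp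
      exact .head hp.1 (ih hp.2)

/-- Signed degree. -/
noncomputable def sdeg (A : Set V) (M : Set (Sym2 V)) (v : V) : ℤ :=
  if v ∈ A then ({e ∈ M | v ∈ e}.ncard : ℤ) else -({e ∈ M | v ∈ e}.ncard : ℤ)

theorem deg_insert (M : Set (Sym2 V)) (e : Sym2 V) (he : e ∉ M) (v : V) :
    {e' ∈ insert e M | v ∈ e'}.ncard = {e' ∈ M | v ∈ e'}.ncard + (if v ∈ e then 1 else 0) := by
  split_ifs with h
  · have : {e' ∈ insert e M | v ∈ e'} = insert e {e' ∈ M | v ∈ e'} := by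
      ext e'
      simp only [Set.mem_insert_iff, Set.mem_ofPred_eq]
      constructor
      · rintro ⟨rfl | h1, h2⟩
        · left; rfl
        · right; exact ⟨h1, h2⟩
      · rintro (rfl | ⟨h1, h2⟩)
        · exact ⟨Or.inl rfl, h⟩
        · exact ⟨Or.inr h1, h2⟩
    rw [this, Set.ncard_insert_of_notMem (fun h' => he h'.1) (Set.toFinite _)]
  · congr 1
    ext e'
    simp only [Set.mem_insert_iff, Set.mem_ofPred_eq]
    constructor
    · rintro ⟨rfl | h1, h2⟩
      · exact absurd h2 h
      · exact ⟨h1, h2⟩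
    · rintro ⟨h1, h2⟩
      exact ⟨Or.inr h1, h2⟩

theorem flip_one {G : SimpleGraph V} {A B : Set V} (hG : Bipartition G A B) {M : Set (Sym2 V)}
    (hM : M ⊆ G.edgeSet) {x y : V} (h : Dir G A M x y) :
    ∃ N ⊆ G.edgeSet, (∀ e, e ∈ N ↔ Xor (e ∈ M) (e = s(x, y))) ∧
      ((N.ncard : ℤ) = M.ncard + (if y ∈ A then 1 else 0) - (if x ∈ A then 1 else 0)) ∧
      ∀ v, sdeg A N v = sdeg A M v + (if v = y then 1 else 0) - (if v = x then 1 else 0) := by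
  obtain ⟨hadj, hx⟩ := h
  have hy := hG.adj_iff hadj
  have hne := hadj.ne
  by_cases hxA : x ∈ A
  · have heM := hx.mp hxA
    have hyA : y ∉ A := by simp [hy, hxA]
    have heq : insert s(x, y) (M \ {s(x, y)}) = M := by
      rw [Set.insert_sdiff_singleton, Set.insert_eq_of_mem heM]
    have hnot : s(x, y) ∉ M \ {s(x, y)} := by simp
    refine ⟨M \ {s(x, y)}, fun e he => hM he.1, ?_, ?_, ?_⟩
    · intro e
      simp only [Set.mem_sdiff, Set.mem_singleton_iff, Xor]
      constructor
      · intro h; exact Or.inl h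
      · rintro (h | ⟨rfl, h⟩)
        · exact h
        · exact absurd heM h
    · have := Set.ncard_insert_of_notMem hnot (Set.toFinite _)
      rw [heq] at this
      rw [this]
      simp [hxA, hyA]
    · intro v
      have := deg_insert _ _ hnot v
      rw [heq] at this
      unfold sdeg
      rw [this]
      by_cases h1 : v = x
      · subst h1; simp [hxA, hne]
      · by_cases h2 : v = y
        · subst h2; simp [hyA, h1]
        · simp [h1, h2]
  · have hnot : s(x, y) ∉ M := fun h => hxA (hx.mpr h)
    have hyA : y ∈ A := hy.mpr hxA
    refine ⟨insert s(x, y) M, Set.insert_subset hadj hM, ?_, ?_, ?_⟩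
    · intro e
      simp only [Set.mem_insert_iff, Xor]
      constructor
      · rintro (rfl | h)
        · exact Or.inr ⟨rfl, hnot⟩
        · exact Or.inl ⟨h, fun h' => hnot (h' ▸ h)⟩
      · rintro (⟨h, -⟩ | ⟨h, -⟩)
        · exact Or.inr h
        · exact Or.inl h
    · rw [Set.ncard_insert_of_notMem hnot (Set.toFinite _)]
      simp [hxA, hyA]
    · intro v
      unfold sdeg
      rw [deg_insert _ _ hnot v]
      by_cases h1 : v = x
      · subst h1; simp [hxA, hne]; ring
      · by_cases h2 : v = y
        · subst h2; simp [hyA, h1]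
        · simp [h1, h2]

theorem flip_trail {G : SimpleGraph V} {A B : Set V} (hG : Bipartition G A B) {x y : V}
    (p : G.Walk x y) (hp : p.IsTrail) : ∀ {M : Set (Sym2 V)} (_ : M ⊆ G.edgeSet)
    (_ : ∀ d ∈ p.darts, Dir G A M d.fst d.snd),
    ∃ N ⊆ G.edgeSet, (∀ e, e ∈ N ↔ Xor (e ∈ M) (e ∈ p.edges)) ∧
      ((N.ncard : ℤ) = M.ncard + (if y ∈ A then 1 else 0) - (if x ∈ A then 1 else 0)) ∧
      ∀ v, sdeg A N v = sdeg A M v + (if v = y then 1 else 0) - (if v = x then 1 else 0) := by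
  induction p with
  | nil =>
    intro M hM _
    exact ⟨M, hM, by simp [Xor], by simp, by simp⟩
  | @cons x x' y h p ih =>
    intro M hM hd
    rw [SimpleGraph.Walk.isTrail_cons] at hp
    simp only [SimpleGraph.Walk.darts_cons, List.forall_mem_cons] at hd
    obtain ⟨M', hM', he', hc', hs'⟩ := flip_one hG hM hd.1
    have hd' : ∀ d ∈ p.darts, Dir G A M' d.fst d.snd := by
      intro d hdp
      have h1 := hd.2 d hdp
      have h2 : s(d.fst, d.snd) ≠ s(x, x') := by
        intro h3
        apply hp.2
        rw [← h3]
        exact List.mem_map.mpr ⟨d, hdp, rfl⟩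
      refine ⟨h1.1, h1.2.trans ?_⟩
      rw [he']
      simp [Xor, h2]
    obtain ⟨N, hN, he, hc, hs⟩ := ih hp.1 hM' hd'
    refine ⟨N, hN, ?_, ?_, ?_⟩
    · intro e
      rw [he, he', SimpleGraph.Walk.edges_cons, List.mem_cons]
      have h4 : e = s(x, x') → e ∉ p.edges := fun h => h ▸ hp.2
      unfold Xor
      tauto
    · rw [hc, hc']; ring
    · intro v; rw [hs, hs']; ring

theorem flip_max {G : SimpleGraph V} {A B : Set V} (hG : Bipartition G A B) {b : V → ℕ}
    {M : Set (Sym2 V)} (hM : IsMaxBMatching G b M) {x y : V} (hx : x ∈ A) (hy : y ∈ A)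
    (hl : IsLoose b M y) (p : G.Walk x y) (hp : p.IsTrail)
    (hd : ∀ d ∈ p.darts, Dir G A M d.fst d.snd) :
    ∃ N, IsMaxBMatching G b N ∧ IsLoose b N x ∧ ∀ e, e ∈ N ↔ Xor (e ∈ M) (e ∈ p.edges) := by
  obtain ⟨N, hN, he, hc, hs⟩ := flip_trail hG p hp hM.1.1 hd
  have hcard : N.ncard = M.ncard := by
    simp only [hx, hy, if_true] at hc; omega
  unfold IsLoose at hl
  refine ⟨N, ⟨⟨hN, ?_⟩, ?_⟩, ?_, he⟩
  · intro v
    have h1 := hs v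
    have h2 := hM.1.2 v
    unfold sdeg at h1
    by_cases hvA : v ∈ A
    · simp only [hvA, if_true] at h1
      by_cases h3 : v = y
      · subst h3; simp only [if_true] at h1; split_ifs at h1 <;> omega
      · simp only [h3, if_false] at h1; split_ifs at h1 <;> omega
    · have h3 : v ≠ y := fun h => hvA (h ▸ hy)
      have h4 : v ≠ x := fun h => hvA (h ▸ hx)
      simp only [hvA, h3, h4, if_false] at h1
      omega
  · intro N' hN'
    rw [hcard]; exact hM.2 N' hN'
  · unfold IsLoose
    have h1 := hs x
    have h2 := hM.1.2 x
    unfold sdeg at h1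
    simp only [hx, if_true] at h1
    by_cases h3 : x = y
    · subst h3; simp only [if_true] at h1; omega
    · simp only [h3, if_false] at h1; omega

theorem no_augment {G : SimpleGraph V} {A B : Set V} (hG : Bipartition G A B) {b : V → ℕ}
    {M : Set (Sym2 V)} (hM : IsMaxBMatching G b M) {x y : V} (hx : x ∉ A) (hy : y ∈ A)
    (hlx : IsLoose b M x) (hly : IsLoose b M y) (h : Reach G A M x y) : False := by
  obtain ⟨p, hp, hd⟩ := reach_iff_path.mp h
  obtain ⟨N, hN, he, hc, hs⟩ := flip_trail hG p hp.isTrail hM.1.1 hd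
  unfold IsLoose at hlx hly
  have hb : IsBMatching G b N := by
    refine ⟨hN, fun v => ?_⟩
    have h1 := hs v
    have h2 := hM.1.2 v
    unfold sdeg at h1
    by_cases hvA : v ∈ A
    · have h4 : v ≠ x := fun h => hx (h ▸ hvA)
      simp only [hvA, if_true, h4, if_false] at h1
      by_cases h3 : v = y
      · subst h3; simp only [if_true] at h1; omega
      · simp only [h3, if_false] at h1; omega
    · have h3 : v ≠ y := fun h => hvA (h ▸ hy)
      simp only [hvA, h3, if_false] at h1
      by_cases h4 : v = x
      · subst h4; simp only [if_true] at h1; omega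
      · simp only [h4, if_false] at h1; omega
  have := hM.2 N hb
  simp only [hx, hy, if_true, if_false] at hc
  omega

theorem deg_eq_sum {G : SimpleGraph V} {M : Set (Sym2 V)} (hM : M ⊆ G.edgeSet) (v : V) :
    ({e ∈ M | v ∈ e}.ncard : ℤ) = ∑ u : V, (if s(v, u) ∈ M then 1 else 0) := by
  rw [Finset.sum_boole]
  congr 1
  have : {e ∈ M | v ∈ e} = (fun u => s(v, u)) '' {u | s(v, u) ∈ M} := by
    ext e
    simp only [Set.mem_ofPred_eq, Set.mem_image]
    constructor
    · rintro ⟨h1, h2⟩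
      obtain ⟨u, rfl⟩ := h2
      exact ⟨u, h1, rfl⟩
    · rintro ⟨u, h, rfl⟩
      exact ⟨h, Sym2.mem_mk_left _ _⟩
  rw [this, Set.ncard_image_of_injective _ (fun a c h => Sym2.congr_right.mp h),
    Set.ncard_eq_toFinset_card']
  congr 1
  ext; simp

/-- Difference digraph of `M` and `N`, oriented according to `M`. -/
def QRel (G : SimpleGraph V) (A : Set V) (M N : Set (Sym2 V)) (x y : V) : Prop :=
  Dir G A M x y ∧ Dir G A N y x

theorem exists_pos {G : SimpleGraph V} {A B : Set V} (hG : Bipartition G A B)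
    {M N : Set (Sym2 V)} (hM : M ⊆ G.edgeSet) (hN : N ⊆ G.edgeSet) (S : Set V)
    (hS : ∀ x y, x ∈ S → QRel G A M N x y → y ∈ S)
    (h : (∃ z ∈ S, sdeg A N z < sdeg A M z) ∨ (∃ x y, x ∉ S ∧ y ∈ S ∧ QRel G A M N x y)) :
    ∃ v ∈ S, sdeg A M v < sdeg A N v := by
  by_contra! hcon
  let g : V → V → ℤ := fun v u => (if v ∈ A then 1 else -1) *
    ((if s(v, u) ∈ N then 1 else 0) - (if s(v, u) ∈ M then 1 else 0))
  have hg : ∀ v, sdeg A N v - sdeg A M v = ∑ u, g v u := by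
    intro v
    simp only [g, ← Finset.mul_sum, Finset.sum_sub_distrib, ← deg_eq_sum hM, ← deg_eq_sum hN]
    unfold sdeg
    split_ifs <;> ring
  have hanti : ∀ v u, g v u = - g u v := by
    intro v u
    simp only [g, Sym2.eq_swap (a := u) (b := v)]
    by_cases hadj : G.Adj v u
    · have := hG.adj_iff hadj
      by_cases hv : v ∈ A <;> simp [this, hv]
    · have h1 : s(v, u) ∉ M := fun h => hadj (hM h)
      have h2 : s(v, u) ∉ N := fun h => hadj (hN h)
      simp [h1, h2]
  have hneg : ∀ v u, g v u < 0 → QRel G A M N v u := by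
    intro v u h
    have hadj : G.Adj v u := by
      by_contra hadj
      have h1 : s(v, u) ∉ M := fun h => hadj (hM h)
      have h2 : s(v, u) ∉ N := fun h => hadj (hN h)
      simp [g, h1, h2] at h
    have h3 := hG.adj_iff hadj
    simp only [g] at h
    unfold QRel Dir
    rw [h3, Sym2.eq_swap (a := u) (b := v)]
    refine ⟨⟨hadj, ?_⟩, hadj.symm, ?_⟩ <;>
    by_cases h4 : v ∈ A <;> by_cases h5 : s(v, u) ∈ M <;> by_cases h6 : s(v, u) ∈ N <;>
      simp [h4, h5, h6] at h ⊢
  have hpos : ∀ x y, QRel G A M N x y → 0 < g y x := by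
    rintro x y ⟨⟨h1, h2⟩, -, h3⟩
    have h4 := hG.adj_iff h1
    simp only [g]
    rw [h4] at h3 ⊢
    rw [Sym2.eq_swap] at h2
    by_cases h5 : x ∈ A
    · simp [← h3, ← h2, h5]
    · simp [← h3, ← h2, h5]
  have hsum : ∑ v with v ∈ S, (sdeg A N v - sdeg A M v) =
      ∑ v with v ∈ S, ∑ u with u ∉ S, g v u := by
    have h0 : ∑ v with v ∈ S, ∑ u with u ∈ S, g v u = 0 := by
      have h1 : ∑ v with v ∈ S, ∑ u with u ∈ S, g v u
          = - ∑ v with v ∈ S, ∑ u with u ∈ S, g v u := by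
        conv_lhs => rw [Finset.sum_comm]
        rw [← Finset.sum_neg_distrib]
        refine Finset.sum_congr rfl fun v _ => ?_
        rw [← Finset.sum_neg_distrib]
        exact Finset.sum_congr rfl fun u _ => hanti u v
      omega
    rw [← zero_add (∑ v with v ∈ S, ∑ u with u ∉ S, g v u), ← h0, ← Finset.sum_add_distrib]
    refine Finset.sum_congr rfl fun v _ => ?_
    rw [hg, Finset.sum_filter_add_sum_filter_not]
  have hcross : ∀ v ∈ S, ∀ u, u ∉ S → 0 ≤ g v u := by
    intro v hv u hu
    by_contra! hlt
    exact hu (hS v u hv (hneg v u hlt))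
  have hR : ∀ v ∈ (Finset.univ.filter (· ∈ S)), 0 ≤ ∑ u with u ∉ S, g v u := by
    intro v hv
    exact Finset.sum_nonneg fun u hu => hcross v (by simpa using hv) u (by simpa using hu)
  have hL : ∀ v ∈ (Finset.univ.filter (· ∈ S)), sdeg A N v - sdeg A M v ≤ 0 := by
    intro v hv
    have := hcon v (by simpa using hv)
    omega
  rcases h with ⟨z, hz, hlt⟩ | ⟨x, y, hx, hy, hq⟩
  · have h1 : ∑ v with v ∈ S, (sdeg A N v - sdeg A M v) < 0 :=
      Finset.sum_neg' hL ⟨z, by simpa using hz, by omega⟩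
    have h2 := Finset.sum_nonneg hR
    omega
  · have h1 := Finset.sum_nonpos hL
    have h2 : 0 < ∑ v with v ∈ S, ∑ u with u ∉ S, g v u :=
      Finset.sum_pos' hR ⟨y, by simpa using hy,
        Finset.sum_pos' (fun u hu => hcross y hy u (by simpa using hu))
          ⟨x, by simpa using hx, hpos x y hq⟩⟩
    omega

/-- Vertices that reach an `M`-loose vertex of `A`. -/
def RSet (G : SimpleGraph V) (b : V → ℕ) (A : Set V) (M : Set (Sym2 V)) (u : V) : Prop :=
  ∃ y ∈ A, IsLoose b M y ∧ Reach G A M u y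

theorem q_reach {G : SimpleGraph V} {A : Set V} {M N : Set (Sym2 V)} {x y : V}
    (h : Relation.ReflTransGen (QRel G A M N) x y) : Reach G A M x y :=
  Relation.ReflTransGen.mono (fun _ _ h => h.1) _ _ h

theorem q_reach' {G : SimpleGraph V} {A : Set V} {M N : Set (Sym2 V)} {x y : V}
    (h : Relation.ReflTransGen (QRel G A M N) x y) : Reach G A N y x := by
  exact Relation.ReflTransGen.mono (fun _ _ h => h.2) _ _ (Relation.reflTransGen_swap.mpr h)

/-- Key lemma on flexible edges. -/
theorem key {G : SimpleGraph V} {A B : Set V} (hG : Bipartition G A B) {b : V → ℕ}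
    {M N : Set (Sym2 V)} (hM : IsMaxBMatching G b M) (hN : IsMaxBMatching G b N) {x y : V}
    (h : QRel G A M N x y) :
    Reach G A M y x ∨ (RSet G b A M x ∧ RSet G b A M y) ∨ (RSet G b B M x ∧ RSet G b B M y) := by
  by_cases hyx : Relation.ReflTransGen (QRel G A M N) y x
  · exact Or.inl (q_reach hyx)
  right
  obtain ⟨v, hv, hvs⟩ := exists_pos hG hM.1.1 hN.1.1
    {z | Relation.ReflTransGen (QRel G A M N) y z}
    (fun _ _ h1 h2 => Relation.ReflTransGen.tail h1 h2) (Or.inr ⟨x, y, hyx, .refl, h⟩)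
  obtain ⟨w, hw, hws⟩ := exists_pos hG hN.1.1 hM.1.1
    {z | Relation.ReflTransGen (QRel G A M N) z x}
    (fun _ _ h1 h2 => Relation.ReflTransGen.head ⟨h2.2, h2.1⟩ h1)
    (Or.inr ⟨y, x, hyx, .refl, ⟨h.2, h.1⟩⟩)
  simp only [Set.mem_ofPred_eq] at hv hw
  have h1 := hM.1.2 v
  have h2 := hN.1.2 v
  have h3 := hM.1.2 w
  have h4 := hN.1.2 w
  unfold sdeg at hvs hws
  by_cases hvA : v ∈ A
  · left
    simp only [hvA, if_true] at hvs
    have hl : IsLoose b M v := by unfold IsLoose; omega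
    exact ⟨⟨v, hvA, hl, .head h.1 (q_reach hv)⟩, ⟨v, hvA, hl, q_reach hv⟩⟩
  by_cases hwA : w ∈ A
  · exfalso
    simp only [hvA, hwA, if_true, if_false] at hvs hws
    exact no_augment hG hN hvA hwA (by unfold IsLoose; omega) (by unfold IsLoose; omega)
      (q_reach' (hw.trans (.head h hv)))
  · right
    simp only [hwA, if_false] at hws
    have hl : IsLoose b M w := by unfold IsLoose; omega
    have hwB := (hG.mem_B w).mpr hwA
    exact ⟨⟨w, hwB, hl, (reach_swap hG M _ _).mpr (q_reach hw)⟩,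
      ⟨w, hwB, hl, (reach_swap hG M _ _).mpr ((q_reach hw).tail h.1)⟩⟩

theorem dir_total {G : SimpleGraph V} {A B : Set V} (hG : Bipartition G A B) (M : Set (Sym2 V))
    {x y : V} (h : G.Adj x y) : Dir G A M x y ∨ Dir G A M y x := by
  unfold Dir
  rw [hG.adj_iff h, Sym2.eq_swap (a := y), G.adj_comm y x]
  tauto

theorem flex_adj {G : SimpleGraph V} {b : V → ℕ} {x y : V} (h : (flexGraph G b).Adj x y) :
    G.Adj x y := by
  obtain ⟨⟨M, hM, he⟩, -⟩ := h
  exact hM.1.1 he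

theorem key_flex {G : SimpleGraph V} {A B : Set V} (hG : Bipartition G A B) {b : V → ℕ}
    {M : Set (Sym2 V)} (hM : IsMaxBMatching G b M) {x y : V} (h : (flexGraph G b).Adj x y) :
    (Reach G A M x y ∧ Reach G A M y x) ∨ (RSet G b A M x ∧ RSet G b A M y) ∨
      (RSet G b B M x ∧ RSet G b B M y) := by
  wlog hd : Dir G A M x y generalizing x y
  · have := this h.symm ((dir_total hG M (flex_adj h)).resolve_left hd)
    tauto
  have hadj := flex_adj h
  have : ∃ N, IsMaxBMatching G b N ∧ QRel G A M N x y := by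
    obtain ⟨⟨N1, hN1, he1⟩, N2, hN2, he2⟩ := h
    have h1 := hd.2
    by_cases he : s(x, y) ∈ M
    · refine ⟨N2, hN2, hd, hadj.symm, ?_⟩
      rw [hG.adj_iff hadj, Sym2.eq_swap]; tauto
    · refine ⟨N1, hN1, hd, hadj.symm, ?_⟩
      rw [hG.adj_iff hadj, Sym2.eq_swap]; tauto
  obtain ⟨N, hN, hq⟩ := this
  rcases key hG hM hN hq with h1 | h1
  · exact Or.inl ⟨.single hd, h1⟩
  · exact Or.inr h1

theorem dset_A {G : SimpleGraph V} {A B : Set V} (hG : Bipartition G A B) {b : V → ℕ}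
    {M : Set (Sym2 V)} (hM : IsMaxBMatching G b M) {z : V} (hz : z ∈ Dset G b) (hzA : z ∈ A) :
    RSet G b A M z := by
  by_cases hl : IsLoose b M z
  · exact ⟨z, hzA, hl, .refl⟩
  obtain ⟨N, hN, hNl⟩ := hz
  have hlt : sdeg A N z < sdeg A M z := by
    unfold sdeg; unfold IsLoose at hl hNl
    simp only [hzA, if_true]; omega
  obtain ⟨v, hv, hvs⟩ := exists_pos hG hM.1.1 hN.1.1
    {w | Relation.ReflTransGen (QRel G A M N) z w}
    (fun _ _ h1 h2 => Relation.ReflTransGen.tail h1 h2) (Or.inl ⟨z, .refl, hlt⟩)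
  simp only [Set.mem_ofPred_eq] at hv
  have h1 := hM.1.2 v
  have h2 := hN.1.2 v
  unfold sdeg at hvs
  by_cases hvA : v ∈ A
  · simp only [hvA, if_true] at hvs
    exact ⟨v, hvA, by unfold IsLoose; omega, q_reach hv⟩
  · simp only [hvA, if_false] at hvs
    exact (no_augment hG hN hvA hzA (by unfold IsLoose; omega) hNl (q_reach' hv)).elim

theorem mem_supp_of_adj {G : SimpleGraph V} {b : V → ℕ} {c : FlexComp G b} {x y : V}
    (hx : x ∈ c.supp) (h : (flexGraph G b).Adj x y) : y ∈ c.supp := by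
  rw [SimpleGraph.ConnectedComponent.mem_supp_iff] at hx ⊢
  rw [← hx]
  exact (SimpleGraph.ConnectedComponent.sound h.symm.reachable)

theorem reach_of_comp {G : SimpleGraph V} {b : V → ℕ} {c : FlexComp G b} {x y : V}
    (hx : x ∈ c.supp) (hy : y ∈ c.supp) :
    Relation.ReflTransGen (flexGraph G b).Adj x y := by
  rw [SimpleGraph.ConnectedComponent.mem_supp_iff] at hx hy
  rw [← hy] at hx
  exact (SimpleGraph.reachable_iff_reflTransGen _ _).mp (SimpleGraph.ConnectedComponent.exact hx)

theorem incons_R {G : SimpleGraph V} {A B : Set V} (hG : Bipartition G A B) {b : V → ℕ}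
    {M : Set (Sym2 V)} (hM : IsMaxBMatching G b M) {c : FlexComp G b}
    (hc : InconsistentComp G b c) {w : V} (hw : w ∈ c.supp) :
    RSet G b A M w ∨ RSet G b B M w := by
  rcases hc with ⟨z, hz, hzD⟩ | ⟨z, hz, hb, u, hu, hadj⟩
  · have h0 : RSet G b A M z ∨ RSet G b B M z := by
      by_cases hzA : z ∈ A
      · exact Or.inl (dset_A hG hM hzD hzA)
      · exact Or.inr (dset_A hG.swap hM hzD ((hG.mem_B z).mpr hzA))
    have hr := reach_of_comp hz hw
    induction hr with
    | refl => exact h0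
    | @tail x y hzx hxy ih =>
      have hx := ih (mem_supp_of_adj hw hxy.symm)
      rcases key_flex hG hM hxy with h1 | h1 | h1
      · rcases hx with ⟨t, ht, htl, hxt⟩ | ⟨t, ht, htl, hxt⟩
        · exact Or.inl ⟨t, ht, htl, h1.2.trans hxt⟩
        · exact Or.inr ⟨t, ht, htl, ((reach_swap hG M _ _).mpr h1.1).trans hxt⟩
      · exact Or.inl h1.2
      · exact Or.inr h1.2
  · rw [hz] at hw
    obtain rfl : w = z := hw
    have hnot : s(w, u) ∉ M := by
      intro h
      have h1 := hM.1.2 w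
      rw [hb, Nat.le_zero, Set.ncard_eq_zero (Set.toFinite _)] at h1
      have : s(w, u) ∈ {e ∈ M | w ∈ e} := ⟨h, Sym2.mem_mk_left _ _⟩
      rw [h1] at this
      exact this
    by_cases hwA : w ∈ A
    · have huB : u ∈ B := by rw [hG.mem_B, hG.adj_iff hadj]; tauto
      obtain ⟨t, ht, htl, hxt⟩ := dset_A hG.swap hM hu huB
      refine Or.inr ⟨t, ht, htl, .head ⟨hadj, ?_⟩ hxt⟩
      rw [hG.mem_B]; tauto
    · have huA : u ∈ A := by rw [hG.adj_iff hadj]; exact hwA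
      obtain ⟨t, ht, htl, hxt⟩ := dset_A hG hM hu huA
      exact Or.inl ⟨t, ht, htl, .head ⟨hadj, by tauto⟩ hxt⟩

theorem R_dset {G : SimpleGraph V} {A B : Set V} (hG : Bipartition G A B) {b : V → ℕ}
    {M : Set (Sym2 V)} (hM : IsMaxBMatching G b M) {x : V} (hx : x ∈ A)
    (h : RSet G b A M x) : x ∈ Dset G b := by
  obtain ⟨y, hy, hl, hr⟩ := h
  obtain ⟨p, hp, hd⟩ := reach_iff_path.mp hr
  obtain ⟨N, hN, hNl, -⟩ := flip_max hG hM hx hy hl p hp.isTrail hd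
  exact ⟨N, hN, hNl⟩

theorem R_incons {G : SimpleGraph V} {A B : Set V} (hG : Bipartition G A B) {b : V → ℕ}
    {M : Set (Sym2 V)} (hM : IsMaxBMatching G b M) {c : FlexComp G b} {u : V} (hu : u ∈ c.supp)
    (h : RSet G b A M u) : InconsistentComp G b c := by
  by_cases huA : u ∈ A
  · exact Or.inl ⟨u, hu, R_dset hG hM huA h⟩
  have h' := h
  obtain ⟨y, hy, hl, hr⟩ := h
  obtain ⟨p, hp, hd⟩ := reach_iff_path.mp hr
  by_cases hb : b u = 0
  · right
    have hno : ∀ N, IsMaxBMatching G b N → ∀ w, s(u, w) ∉ N := by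
      intro N hN w h
      have h1 := hN.1.2 u
      rw [hb, Nat.le_zero, Set.ncard_eq_zero (Set.toFinite _)] at h1
      have : s(u, w) ∈ {e ∈ N | u ∈ e} := ⟨h, Sym2.mem_mk_left _ _⟩
      rw [h1] at this
      exact this
    refine ⟨u, ?_, hb, ?_⟩
    · ext w
      constructor
      · intro hw
        rcases Relation.ReflTransGen.cases_head (reach_of_comp hu hw) with h1 | ⟨t, ht, -⟩
        · exact h1.symm
        · obtain ⟨⟨N, hN, he⟩, -⟩ := ht
          exact (hno N hN t he).elim
      · rintro rfl; exact hu
    · rcases Relation.ReflTransGen.cases_head hr with h1 | ⟨t, ht, htr⟩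
      · exact (huA (h1 ▸ hy)).elim
      · exact ⟨t, R_dset hG hM ((hG.adj_iff ht.1).mpr huA) ⟨y, hy, hl, htr⟩, ht.1⟩
  · left
    by_cases hul : IsLoose b M u
    · exact ⟨u, hu, M, hM, hul⟩
    have hne : {e ∈ M | u ∈ e}.Nonempty := by
      rw [← Set.ncard_pos (Set.toFinite _)]
      unfold IsLoose at hul
      omega
    obtain ⟨e, he, hue⟩ := hne
    obtain ⟨x, rfl⟩ := hue
    have hadj : G.Adj u x := hM.1.1 he
    have hxA : x ∈ A := (hG.adj_iff hadj).mpr huA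
    have hdir : Dir G A M x u := ⟨hadj.symm, by rw [Sym2.eq_swap]; tauto⟩
    have hnotin : s(x, u) ∉ p.edges := by
      intro hin
      cases p with
      | nil => simp at hin
      | @cons _ u' _ h0 q =>
        rw [SimpleGraph.Walk.cons_isPath_iff] at hp
        rw [SimpleGraph.Walk.edges_cons, List.mem_cons] at hin
        rcases hin with hin | hin
        · have h1 := hd ⟨(u, u'), h0⟩ (by simp)
          have h2 : s(u, u') ∈ M := by rw [← hin, Sym2.eq_swap]; exact he
          exact huA (h1.2.mpr h2)
        · exact hp.2 (SimpleGraph.Walk.mem_support_of_mem_edges hin (Sym2.mem_mk_right _ _))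
    obtain ⟨N, hN, hNl, hNe⟩ := flip_max hG hM hxA hy hl (.cons hadj.symm p)
      (by rw [SimpleGraph.Walk.isTrail_cons]; exact ⟨hp.isTrail, hnotin⟩)
      (by simpa using ⟨hdir, hd⟩)
    refine ⟨x, mem_supp_of_adj hu ⟨⟨M, hM, he⟩, N, hN, ?_⟩, N, hN, hNl⟩
    rw [hNe, Sym2.eq_swap]
    rw [Sym2.eq_swap] at he
    simp [Xor, he]

theorem comp_strong {G : SimpleGraph V} {A B : Set V} (hG : Bipartition G A B) {b : V → ℕ}
    {M : Set (Sym2 V)} (hM : IsMaxBMatching G b M) {c : FlexComp G b}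
    (hc : ConsistentComp G b c) {u v : V} (hu : u ∈ c.supp) (hv : v ∈ c.supp) :
    Reach G A M u v := by
  have hr := reach_of_comp hu hv
  induction hr with
  | refl => exact .refl
  | @tail x y hux hxy ih =>
    have hx := mem_supp_of_adj hv hxy.symm
    rcases key_flex hG hM hxy with h1 | h1 | h1
    · exact (ih hx).trans h1.1
    · exact (hc (R_incons hG hM hx h1.1)).elim
    · exact (hc (R_incons hG.swap hM hx h1.1)).elim

theorem edge_step {G : SimpleGraph V} {A B : Set V} (hG : Bipartition G A B) {b : V → ℕ}
    {M : Set (Sym2 V)} (hM : IsMaxBMatching G b M) {x y : V} (h : Dir G A M x y) :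
    StepRel G b A B ((flexGraph G b).connectedComponentMk x)
      ((flexGraph G b).connectedComponentMk y) := by
  by_cases hf : (flexGraph G b).Adj x y
  · exact Or.inl (SimpleGraph.ConnectedComponent.sound hf.reachable)
  right
  have hadj := hG.adj_iff h.1
  have hx : x ∈ ((flexGraph G b).connectedComponentMk x).supp := rfl
  have hy : y ∈ ((flexGraph G b).connectedComponentMk y).supp := rfl
  by_cases hxA : x ∈ A
  · left
    have he := h.2.mp hxA
    refine ⟨x, ⟨hx, hxA⟩, y, ⟨hy, ?_⟩, h.1, ?_⟩
    · rw [hG.mem_B, hadj]; tauto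
    · intro N hN
      by_contra hne
      exact hf ⟨⟨M, hM, he⟩, N, hN, hne⟩
  · right
    have he : s(x, y) ∉ M := fun h' => hxA (h.2.mpr h')
    refine ⟨y, ⟨hy, hadj.mpr hxA⟩, x, ⟨hx, (hG.mem_B x).mpr hxA⟩, h.1.symm, ?_⟩
    intro N hN hmem
    rw [Sym2.eq_swap] at hmem
    exact hf ⟨⟨N, hN, hmem⟩, M, hM, he⟩

theorem chain_reach {G : SimpleGraph V} {A B : Set V} (hG : Bipartition G A B) {b : V → ℕ}
    {M : Set (Sym2 V)} (hM : IsMaxBMatching G b M) {c d : FlexComp G b}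
    (hc : ConsistentComp G b c)
    (h : Relation.ReflTransGen (ConsStepRel G b A B) c d) :
    ∀ u ∈ c.supp, ∀ v ∈ d.supp, Reach G A M u v := by
  induction h with
  | refl => intro u hu v hv; exact comp_strong hG hM hc hu hv
  | @tail d e _ hde ih =>
    intro u hu v hv
    obtain ⟨hd, he, rfl | ⟨x, hx, y, hy, hxy⟩ | ⟨x, hx, y, hy, hxy⟩⟩ := hde
    · exact ih u hu v hv
    · have : Dir G A M x y := ⟨hxy.1, by simp [hx.2, hxy.2 M hM]⟩
      exact ((ih u hu x hx.1).tail this).trans (comp_strong hG hM he hy.1 hv)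
    · have hyA : y ∉ A := (hG.mem_B y).mp hy.2
      have : Dir G A M y x := ⟨hxy.1.symm, by
        rw [Sym2.eq_swap]; simp [hyA, hxy.2 M hM]⟩
      exact ((ih u hu y hy.1).tail this).trans (comp_strong hG hM he hx.1 hv)

theorem reach_chain {G : SimpleGraph V} {A B : Set V} (hG : Bipartition G A B) {b : V → ℕ}
    {M : Set (Sym2 V)} (hM : IsMaxBMatching G b M) {u v : V}
    (hc : ConsistentComp G b ((flexGraph G b).connectedComponentMk u))
    (hd : ConsistentComp G b ((flexGraph G b).connectedComponentMk v))
    (h : Reach G A M u v) :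
    Relation.ReflTransGen (ConsStepRel G b A B) ((flexGraph G b).connectedComponentMk u)
      ((flexGraph G b).connectedComponentMk v) := by
  have hall : ∀ w, Reach G A M u w → Reach G A M w v →
      ConsistentComp G b ((flexGraph G b).connectedComponentMk w) := by
    intro w huw hwv hinc
    rcases incons_R hG hM hinc (w := w) rfl with ⟨t, ht, htl, hxt⟩ | ⟨t, ht, htl, hxt⟩
    · exact hc (R_incons hG hM (u := u) rfl ⟨t, ht, htl, huw.trans hxt⟩)
    · exact hd (R_incons hG.swap hM (u := v) rfl
        ⟨t, ht, htl, ((reach_swap hG M _ _).mpr hwv).trans hxt⟩)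
  clear hd
  have : ∀ w, Reach G A M u w → Reach G A M w v →
      Relation.ReflTransGen (ConsStepRel G b A B) ((flexGraph G b).connectedComponentMk u)
      ((flexGraph G b).connectedComponentMk w) := by
    intro w huw
    induction huw with
    | refl => intro _; exact .refl
    | @tail x y hux hxy ih =>
      intro hyv
      have hxv : Reach G A M x v := .head hxy hyv
      exact (ih hxv).tail ⟨hall x hux hxv, hall y (hux.tail hxy) hyv, edge_step hG hM hxy⟩
  exact this v h .refl

end Helpers

/-- For `b`-consistent flexible components `C` and `D` and a maximum `b`-matching `M`, the
following are equivalent: `C ⪯_A D` (via a chain of `b`-consistent flexible components);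
every `u ∈ V(C)`, `v ∈ V(D)` are joined by an `(M; A, B)`-ascending path; some
`u ∈ V(C)`, `v ∈ V(D)` are joined by an `(M; A, B)`-ascending path. -/
theorem stmt_19 (G : SimpleGraph V) (A B : Set V) (hG : Bipartition G A B) (b : V → ℕ)
    (M : Set (Sym2 V)) (hM : IsMaxBMatching G b M)
    (c d : FlexComp G b) (hc : ConsistentComp G b c) (hd : ConsistentComp G b d) :
    (Relation.ReflTransGen (ConsStepRel G b A B) c d ↔
      ∀ u ∈ c.supp, ∀ v ∈ d.supp, ∃ p : G.Walk u v, IsAscending A B M p) ∧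
    (Relation.ReflTransGen (ConsStepRel G b A B) c d ↔
      ∃ u ∈ c.supp, ∃ v ∈ d.supp, ∃ p : G.Walk u v, IsAscending A B M p) := by
  have hiff : ∀ u v : V, (∃ p : G.Walk u v, IsAscending A B M p) ↔ Reach G A M u v := by
    intro u v
    rw [reach_iff_path]
    exact exists_congr fun p => ascending_iff hG M p
  simp only [hiff]
  have h12 := fun h => chain_reach hG hM hc h (d := d) (A := A) (B := B)
  have h31 : (∃ u ∈ c.supp, ∃ v ∈ d.supp, Reach G A M u v) →
      Relation.ReflTransGen (ConsStepRel G b A B) c d := by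
    rintro ⟨u, hu, v, hv, h⟩
    rw [SimpleGraph.ConnectedComponent.mem_supp_iff] at hu hv
    subst hu hv
    exact reach_chain hG hM hc hd h
  have h23 : (∀ u ∈ c.supp, ∀ v ∈ d.supp, Reach G A M u v) →
      ∃ u ∈ c.supp, ∃ v ∈ d.supp, Reach G A M u v := by
    intro h
    obtain ⟨u, hu⟩ := c.nonempty_supp
    obtain ⟨v, hv⟩ := d.nonempty_supp
    exact ⟨u, hu, v, hv, h u hu v hv⟩
  exact ⟨⟨h12, fun h => h31 (h23 h)⟩, ⟨fun h => h23 (h12 h), h31⟩⟩
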